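/- Up to isometries of ℝ², there are exactly three convex lattice equable kites: every convex lattice equable kite can be mapped by an isometry of ℝ² onto one of (a) the rhombus with vertices (0,0), (4,−3), (4,2), (0,5) (side length 5); (b) the square with vertices (0,0), (4,0), (4,4), (0,4); (c) the kite with vertices (0,0), (12,9), (12,12), (9,12) (side lengths 3 and 15). -/

import Mathlib

/-!
Let `z` be the primitive lattice vector along the axis of a lattice kite `OABC` and `N = |z|²`.
Then `B - O = g z`, `C - A = m z^⊥` and `A + C - O - B = w z` for integers `g`, `m`, `w`, and
equability becomes the single equation `(E - 16) (E g² - 16 w²) = 16 m⁴ N`, where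
`E = m² N = |AC|²`. The triangle inequality gives `E > 16`. Multiplying the equation by `N` shows
that `E - 16` divides `16 E²`, hence `16³`, so that `E - 16` is a power of two. Convexity means
`|w| < g`, which bounds `E` and `g`. The finitely many candidates are cut down to four
`(m, N, g, |w|)` because `N` is a sum of two coprime squares, hence divisible by neither `3` nor
`4`, and because the vertices are lattice points, which forces `g + w` and `m` to have the same
parity.
-/

noncomputable section

/-- Euclidean distance between two points of `ℝ × ℝ`. -/
def dist2 (p q : ℝ × ℝ) : ℝ := Real.sqrt ((p.1 - q.1) ^ 2 + (p.2 - q.2) ^ 2)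

/-- Signed cross product of the vectors `q - p` and `r - p`. -/
def cross (p q r : ℝ × ℝ) : ℝ :=
  (q.1 - p.1) * (r.2 - p.2) - (q.2 - p.2) * (r.1 - p.1)

/-- Three points are collinear. -/
def Collinear3 (p q r : ℝ × ℝ) : Prop := cross p q r = 0

/-- Dot product on `ℝ × ℝ`. -/
def dot2 (p q : ℝ × ℝ) : ℝ := p.1 * q.1 + p.2 * q.2

/-- Closed segment between two points. -/
def Seg (p q : ℝ × ℝ) : Set (ℝ × ℝ) :=
  {x | ∃ t : ℝ, 0 ≤ t ∧ t ≤ 1 ∧ x = (1 - t) • p + t • q}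

/-- Twice the signed (shoelace) area of the quadrilateral `O A B C`. -/
def shoelace (O A B C : ℝ × ℝ) : ℝ :=
  (O.1 * A.2 - A.1 * O.2) + (A.1 * B.2 - B.1 * A.2) +
    (B.1 * C.2 - C.1 * B.2) + (C.1 * O.2 - O.1 * C.2)

/-- Area of the (simple) quadrilateral `O A B C`, by the shoelace formula. -/
def quadArea (O A B C : ℝ × ℝ) : ℝ := |shoelace O A B C| / 2

/-- Perimeter of the quadrilateral `O A B C`. -/
def quadPerim (O A B C : ℝ × ℝ) : ℝ :=
  dist2 O A + dist2 A B + dist2 B C + dist2 C O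

/-- Simple quadrilateral: no three vertices collinear, and the four closed sides
intersect only at shared endpoints. -/
def IsSimpleQuad (O A B C : ℝ × ℝ) : Prop :=
  ¬ Collinear3 O A B ∧ ¬ Collinear3 A B C ∧ ¬ Collinear3 B C O ∧ ¬ Collinear3 C O A ∧
  Seg O A ∩ Seg B C = ∅ ∧ Seg A B ∩ Seg C O = ∅ ∧
  Seg O A ∩ Seg A B = {A} ∧ Seg A B ∩ Seg B C = {B} ∧
  Seg B C ∩ Seg C O = {C} ∧ Seg C O ∩ Seg O A = {O}

/-- Quadrilateral `O A B C`: simple, with vertices in counterclockwise order. -/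
def IsQuad (O A B C : ℝ × ℝ) : Prop :=
  IsSimpleQuad O A B C ∧ 0 < shoelace O A B C

/-- A point of `ℝ × ℝ` with integer coordinates. -/
def IsLatticePt (p : ℝ × ℝ) : Prop := ∃ m n : ℤ, p = ((m : ℝ), (n : ℝ))

/-- An isometry of the Euclidean plane `ℝ × ℝ`. -/
def IsIsometry2 (f : ℝ × ℝ → ℝ × ℝ) : Prop :=
  Function.Bijective f ∧ ∀ p q, dist2 (f p) (f q) = dist2 p q

/-- The four vertices are in convex position: no vertex lies in the convex hull
of the other three. -/
def ConvexPos (O A B C : ℝ × ℝ) : Prop :=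
  O ∉ convexHull ℝ ({A, B, C} : Set (ℝ × ℝ)) ∧
  A ∉ convexHull ℝ ({O, B, C} : Set (ℝ × ℝ)) ∧
  B ∉ convexHull ℝ ({O, A, C} : Set (ℝ × ℝ)) ∧
  C ∉ convexHull ℝ ({O, A, B} : Set (ℝ × ℝ))

/-- The segment `pq` is parallel to the segment `rs`. -/
def Para (p q r s : ℝ × ℝ) : Prop :=
  (q.1 - p.1) * (s.2 - r.2) - (q.2 - p.2) * (s.1 - r.1) = 0

/-- Area of the triangle `p q r`. -/
def triArea (p q r : ℝ × ℝ) : ℝ := |cross p q r| / 2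

/-- Heron's formula: area of a triangle with side lengths `p`, `q`, `r`. -/
def heronArea (p q r : ℝ) : ℝ :=
  Real.sqrt ((p + q + r) * (-p + q + r) * (p - q + r) * (p + q - r)) / 4

end

section Arithmetic

theorem exists_eq_mul_of_isCoprime_of_cross_eq {R : Type*} [CommRing R] {u v x y : R}
    (huv : IsCoprime u v) (h : u * y = v * x) : ∃ k, x = k * u ∧ y = k * v := by
  obtain ⟨a, b, hab⟩ := huv
  exact ⟨a * x + b * y, by linear_combination -x * hab - b * h,
    by linear_combination -y * hab + a * h⟩

theorem not_dvd_sq_add_sq_of_isCoprime {d : ℕ} (hd : ¬IsSquare (-1 : ZMod d)) {u v : ℤ}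
    (huv : IsCoprime u v) : ¬(d : ℤ) ∣ u ^ 2 + v ^ 2 := fun h ↦
  hd <| ZMod.isSquare_neg_one_of_dvd (Int.natCast_dvd.1 h)
    (ZMod.isSquare_neg_one_of_eq_sq_add_sq_of_isCoprime rfl huv)

theorem even_iff_even_of_isCoprime {s m u v : ℤ} (huv : IsCoprime u v)
    (h₁ : Even (s * u + m * v)) (h₂ : Even (s * v - m * u)) : Even s ↔ Even m := by
  have hodd : ¬(Even u ∧ Even v) := fun ⟨hu, hv⟩ ↦
    Int.prime_two.not_isUnit (huv.isUnit_of_dvd' hu.two_dvd hv.two_dvd)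
  simp only [Int.even_add, Int.even_sub, Int.even_mul] at h₁ h₂
  tauto

theorem exists_isCoprime_of_orthogonal {b₁ b₂ d₁ d₂ e₁ e₂ : ℤ} (hpos : 0 < b₁ * d₂ - b₂ * d₁)
    (hbd : b₁ * d₁ + b₂ * d₂ = 0) (hed : e₁ * d₁ + e₂ * d₂ = 0) :
    ∃ u v g m w : ℤ, IsCoprime u v ∧ 0 < g ∧ 0 < m ∧ b₁ = g * u ∧ b₂ = g * v ∧
      d₁ = m * -v ∧ d₂ = m * u ∧ e₁ = w * u ∧ e₂ = w * v := by
  have hb : 0 < Int.gcd b₁ b₂ := by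
    refine Int.gcd_pos_iff.2 (not_and_or.1 ?_)
    rintro ⟨rfl, rfl⟩
    simp at hpos
  obtain ⟨u, v, huv, hb₁, hb₂⟩ := Int.exists_gcd_one hb
  have hg : (0 : ℤ) < Int.gcd b₁ b₂ := mod_cast hb
  generalize (Int.gcd b₁ b₂ : ℤ) = g at hg hb₁ hb₂
  subst hb₁ hb₂
  have hcop : IsCoprime u v := Int.isCoprime_iff_gcd_eq_one.2 huv
  have hd : -v * d₂ = u * d₁ := mul_left_cancel₀ hg.ne' (by linear_combination -hbd)
  obtain ⟨m, rfl, rfl⟩ := exists_eq_mul_of_isCoprime_of_cross_eq hcop.symm.neg_left hd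
  have hm : 0 < m := by
    have : 0 < m * (g * (u ^ 2 + v ^ 2)) := by linarith
    exact pos_of_mul_pos_left this (by positivity)
  have he : u * e₂ = v * e₁ := mul_left_cancel₀ hm.ne' (by linear_combination hed)
  obtain ⟨w, rfl, rfl⟩ := exists_eq_mul_of_isCoprime_of_cross_eq hcop he
  exact ⟨u, v, g, m, w, hcop, hg, hm, mul_comm _ _, mul_comm _ _, rfl, rfl, rfl, rfl⟩

end Arithmetic

/-- The condition for a kite `OABC` with `B - O = g z`, `C - A = m z^⊥` and `A + C - O - B = w z`,
where `N = |z|²`, to be equable. -/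
def KiteEquation {R : Type*} [CommRing R] (m N g w : R) : Prop :=
  (m ^ 2 * N - 16) * (m ^ 2 * N * g ^ 2 - 16 * w ^ 2) = 16 * m ^ 4 * N

/-- The pairs `(m, N)` allowed by the divisibility conditions on `m ^ 2 * N - 16` and `N`. -/
def candidatePairs : List (ℤ × ℤ) := [(1, 17), (3, 2), (2, 5), (4, 2), (4, 5), (12, 1), (4, 17)]

/-- The parameters `(m, N, g, w)` of the convex lattice equable kites. The first and last entry
describe the same rhombus, seen along its long and its short diagonal; the two signs of `w` describe
the same kite, seen from opposite ends of its axis. -/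
def equableParameters : List (ℤ × ℤ × ℤ × ℤ) :=
  [(2, 5, 4, 0), (3, 2, 12, 9), (3, 2, 12, -9), (4, 2, 4, 0), (4, 5, 2, 0)]

theorem mem_candidatePairs {m N : ℤ} {k : ℕ} (hk : k ≤ 9) (hm : 0 < m)
    (hN : 0 < N) (h3 : ¬3 ∣ N) (h4 : ¬4 ∣ N) (h : m ^ 2 * N = 2 ^ k + 16) :
    (m, N) ∈ candidatePairs := by
  have hm23 : m < 23 := by
    have : (2 : ℤ) ^ k ≤ 2 ^ 9 := by gcongr; norm_num
    nlinarith
  have hdvd : m ^ 2 ∣ 2 ^ k + 16 := ⟨N, h.symm⟩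
  obtain rfl : N = (2 ^ k + 16) / m ^ 2 :=
    (Int.ediv_eq_of_eq_mul_right (by positivity) h.symm).symm
  have search : ∀ k ∈ Finset.range 10, ∀ m ∈ Finset.Ioo (0 : ℤ) 23, m ^ 2 ∣ 2 ^ k + 16 →
      ¬3 ∣ (2 ^ k + 16) / m ^ 2 → ¬4 ∣ (2 ^ k + 16) / m ^ 2 →
      (m, (2 ^ k + 16) / m ^ 2) ∈ candidatePairs := by
    decide +kernel
  exact search k (Finset.mem_range.2 (by lia)) m (Finset.mem_Ioo.2 ⟨hm, hm23⟩) hdvd h3 h4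

namespace KiteEquation

section Bounds

variable {R : Type*} [CommRing R] [LinearOrder R] [IsStrictOrderedRing R] {g m N w : R}

theorem sub_sixteen_sq_mul_sq_lt (heq : KiteEquation m N g w) (hE : 16 < m ^ 2 * N)
    (hw : w ^ 2 < g ^ 2) : (m ^ 2 * N - 16) ^ 2 * g ^ 2 < 16 * m ^ 4 * N :=
  calc (m ^ 2 * N - 16) ^ 2 * g ^ 2
      = (m ^ 2 * N - 16) * (m ^ 2 * N * g ^ 2 - 16 * g ^ 2) := by ring
    _ < (m ^ 2 * N - 16) * (m ^ 2 * N * g ^ 2 - 16 * w ^ 2) := by gcongr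
    _ = 16 * m ^ 4 * N := heq

theorem sixteen_lt_sq_mul (heq : KiteEquation m N g w) (hE : 16 < m ^ 2 * N)
    (hN : 0 < N) : 16 < g ^ 2 * N := by
  have hle : (m ^ 2 * N) * (16 * (m ^ 2 * N)) ≤
      (m ^ 2 * N) * ((m ^ 2 * N - 16) * (g ^ 2 * N)) := by
    have : 0 ≤ (m ^ 2 * N - 16) * (16 * w ^ 2) * N :=
      mul_nonneg (mul_nonneg (by linarith) (by positivity)) hN.le
    rw [KiteEquation] at heq
    linear_combination this - N * heq
  have hle' := le_of_mul_le_mul_left hle (by linarith)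
  nlinarith

end Bounds

variable {g m N w : ℤ}

theorem sq_mul_le (heq : KiteEquation m N g w) (hE : 16 < m ^ 2 * N) (hN : 0 < N)
    (hw : w ^ 2 < g ^ 2) : m ^ 2 * N ≤ 536 := by
  have hlt : 17 * (m ^ 2 * N - 16) ^ 2 < 16 * (m ^ 2 * N) ^ 2 :=
    calc 17 * (m ^ 2 * N - 16) ^ 2
        ≤ g ^ 2 * N * (m ^ 2 * N - 16) ^ 2 := by gcongr; exact heq.sixteen_lt_sq_mul hE hN
      _ = (m ^ 2 * N - 16) ^ 2 * g ^ 2 * N := by ring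
      _ < 16 * m ^ 4 * N * N :=
        mul_lt_mul_of_pos_right (heq.sub_sixteen_sq_mul_sq_lt hE hw) hN
      _ = 16 * (m ^ 2 * N) ^ 2 := by ring
  nlinarith

theorem exists_eq_two_pow_add_sixteen (heq : KiteEquation m N g w)
    (hE : 16 < m ^ 2 * N) : ∃ k : ℕ, m ^ 2 * N = 2 ^ k + 16 := by
  have hdvd : m ^ 2 * N - 16 ∣ 2 ^ 12 :=
    ⟨(m ^ 2 * N * g ^ 2 - 16 * w ^ 2) * N - 16 * (m ^ 2 * N + 16),
      by rw [KiteEquation] at heq; linear_combination -N * heq⟩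
  obtain ⟨k, -, hassoc⟩ := (dvd_prime_pow Int.prime_two 12).1 hdvd
  refine ⟨k, ?_⟩
  linarith [Int.eq_of_associated_of_nonneg hassoc (by linarith) (by positivity)]

theorem mem_equableParameters (heq : KiteEquation m N g w) (hE : 16 < m ^ 2 * N) (hg : 0 < g)
    (hm : 0 < m) (hN : 0 < N) (h3 : ¬3 ∣ N) (h4 : ¬4 ∣ N) (hw : |w| < g)
    (hparity : Even (g + w) ↔ Even m) : (m, N, g, w) ∈ equableParameters := by
  have hwg : w ^ 2 < g ^ 2 := sq_lt_sq.2 (hw.trans_le (le_abs_self g))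
  obtain ⟨k, hEk⟩ := heq.exists_eq_two_pow_add_sixteen hE
  have hk9 : k ≤ 9 := by
    have hle := heq.sq_mul_le hE hN hwg
    by_contra! hk
    have : (2 : ℤ) ^ 10 ≤ 2 ^ k := by gcongr <;> lia
    linarith
  have hpairs := mem_candidatePairs hk9 hm hN h3 h4 hEk
  have hg25 : g ≤ 25 := by
    have hlt := heq.sub_sixteen_sq_mul_sq_lt hE hwg
    simp only [candidatePairs, List.mem_cons, Prod.mk.injEq, List.not_mem_nil, or_false] at hpairs
    rcases hpairs with h | h | h | h | h | h | h <;> obtain ⟨rfl, rfl⟩ := h <;> nlinarith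
  have search : ∀ mN ∈ candidatePairs,
      ∀ g ∈ Finset.Icc (1 : ℤ) 25, ∀ w ∈ Finset.Ioo (-g) g, (Even (g + w) ↔ Even mN.1) →
      KiteEquation mN.1 mN.2 g w → (mN.1, mN.2, g, w) ∈ equableParameters := by
    unfold KiteEquation
    decide +kernel
  exact search _ hpairs g (Finset.mem_Icc.2 ⟨hg, hg25⟩) w (Finset.mem_Ioo.2 (abs_lt.1 hw))
    hparity heq

end KiteEquation

section Similarity

/-- The map `p ↦ o + z * p` of the plane, with `ℝ × ℝ` read as the complex plane. It is an
orientation-preserving similarity if `z ≠ 0`, and is used as a coordinate system with origin `o` and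
first axis along `z`. -/
def frameMap (o z p : ℝ × ℝ) : ℝ × ℝ :=
  (o.1 + (z.1 * p.1 - z.2 * p.2), o.2 + (z.2 * p.1 + z.1 * p.2))

theorem frameMap_zero (o z : ℝ × ℝ) : frameMap o z (0, 0) = o := by
  simp [frameMap]

theorem dist2_frameMap (o z p q : ℝ × ℝ) :
    dist2 (frameMap o z p) (frameMap o z q) = √(z.1 ^ 2 + z.2 ^ 2) * dist2 p q := by
  rw [dist2, dist2, ← Real.sqrt_mul (by positivity)]
  congr 1
  simp only [frameMap]
  ring

theorem frameMap_bijective (o : ℝ × ℝ) {z : ℝ × ℝ} (hz : z.1 ^ 2 + z.2 ^ 2 ≠ 0) :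
    Function.Bijective (frameMap o z) := by
  refine Function.bijective_iff_has_inverse.2 ⟨fun p ↦
    ((z.1 * (p.1 - o.1) + z.2 * (p.2 - o.2)) / (z.1 ^ 2 + z.2 ^ 2),
      (z.1 * (p.2 - o.2) - z.2 * (p.1 - o.1)) / (z.1 ^ 2 + z.2 ^ 2)), fun p ↦ ?_, fun p ↦ ?_⟩ <;>
  · ext <;> simp only [frameMap] <;> field_simp <;> ring

theorem exists_isIsometry2_frameMap (o o' : ℝ × ℝ) {z z' : ℝ × ℝ} (hz : z.1 ^ 2 + z.2 ^ 2 ≠ 0)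
    (hzz' : z'.1 ^ 2 + z'.2 ^ 2 = z.1 ^ 2 + z.2 ^ 2) :
    ∃ φ, IsIsometry2 φ ∧ φ ∘ frameMap o z = frameMap o' z' := by
  let e := Equiv.ofBijective (frameMap o z) (frameMap_bijective o hz)
  refine ⟨frameMap o' z' ∘ e.symm, ⟨(frameMap_bijective o' (hzz' ▸ hz)).comp e.symm.bijective,
    fun p q ↦ ?_⟩, ?_⟩
  · calc dist2 (frameMap o' z' (e.symm p)) (frameMap o' z' (e.symm q))
        = dist2 (frameMap o z (e.symm p)) (frameMap o z (e.symm q)) := by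
          simp only [dist2_frameMap, hzz']
      _ = dist2 p q := congrArg₂ dist2 (e.apply_symm_apply p) (e.apply_symm_apply q)
  · rw [Function.comp_assoc]
    exact congrArg (frameMap o' z' ∘ ·) (funext e.symm_apply_apply)

theorem frameMap_mem_segment (o z : ℝ × ℝ) {x y t : ℝ} (hxt : x ≤ t) (hty : t ≤ y) :
    frameMap o z (t, 0) ∈ segment ℝ (frameMap o z (x, 0)) (frameMap o z (y, 0)) := by
  obtain ⟨a, b, ha, hb, hab, rfl⟩ :=
    (segment_eq_Icc (hxt.trans hty)).ge ⟨hxt, hty⟩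
  refine ⟨a, b, ha, hb, hab, ?_⟩
  ext
  · simp only [frameMap, Prod.fst_add, Prod.smul_fst, smul_eq_mul]
    linear_combination o.1 * hab
  · simp only [frameMap, Prod.snd_add, Prod.smul_snd, smul_eq_mul]
    linear_combination o.2 * hab

end Similarity

section FramedKite

variable {O A B C z : ℝ × ℝ} {g m w : ℝ}

theorem dist2_comm (p q : ℝ × ℝ) : dist2 p q = dist2 q p := by
  unfold dist2
  congr 1
  ring

theorem dist2_sq (p q : ℝ × ℝ) : dist2 p q ^ 2 = (p.1 - q.1) ^ 2 + (p.2 - q.2) ^ 2 :=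
  Real.sq_sqrt (by positivity)

/-- The kite `OABC` has axis `B - O = g z`, cross diagonal `C - A = m z^⊥` and
`A + C - O - B = w z`. -/
structure IsFramedKite (O A B C z : ℝ × ℝ) (g m w : ℝ) : Prop where
  A_eq : A = frameMap O z ((g + w) / 2, -m / 2)
  B_eq : B = frameMap O z (g, 0)
  C_eq : C = frameMap O z ((g + w) / 2, m / 2)

namespace IsFramedKite

/-- The vertices of the kite with the given parameters in the standard position `O = (0, 0)`,
`z = (1, 0)`. -/
def model (g m w : ℝ) : Set (ℝ × ℝ) :=
  {(0, 0), ((g + w) / 2, -m / 2), (g, 0), ((g + w) / 2, m / 2)}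

theorem vertices_eq (h : IsFramedKite O A B C z g m w) :
    {O, A, B, C} = frameMap O z '' model g m w := by
  simp only [model, Set.image_insert_eq, Set.image_singleton, frameMap_zero, ← h.A_eq, ← h.B_eq,
    ← h.C_eq]

theorem reverse (h : IsFramedKite O A B C z g m w) : IsFramedKite B C O A (-z) g m (-w) := by
  obtain ⟨rfl, rfl, rfl⟩ := h
  constructor <;> ext <;> simp only [frameMap, Prod.fst_neg, Prod.snd_neg] <;> ring

theorem four_mul_dist2_sq (h : IsFramedKite O A B C z g m w) :
    4 * dist2 O A ^ 2 = ((g + w) ^ 2 + m ^ 2) * (z.1 ^ 2 + z.2 ^ 2) := by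
  rw [dist2_sq, h.A_eq]
  simp only [frameMap]
  ring

theorem shoelace_eq (h : IsFramedKite O A B C z g m w) :
    shoelace O A B C = g * m * (z.1 ^ 2 + z.2 ^ 2) := by
  rw [shoelace, h.A_eq, h.B_eq, h.C_eq]
  simp only [frameMap]
  ring

theorem neg_lt_of_notMem_convexHull (h : IsFramedKite O A B C z g m w) (hg : 0 < g)
    (hO : O ∉ convexHull ℝ {A, B, C}) : -w < g := by
  by_contra! hgw
  have hconvex := convex_convexHull ℝ {A, B, C}
  have hsub := subset_convexHull ℝ {A, B, C}
  have hmid : midpoint ℝ A C = frameMap O z ((g + w) / 2, 0) := by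
    rw [h.A_eq, h.C_eq, midpoint_eq_smul_add]
    ext <;> simp only [frameMap, Prod.fst_add, Prod.snd_add, Prod.smul_fst, Prod.smul_snd,
      invOf_eq_inv, smul_eq_mul] <;> ring
  have hmid_mem : frameMap O z ((g + w) / 2, 0) ∈ convexHull ℝ {A, B, C} :=
    hmid ▸ hconvex.midpoint_mem (hsub (by simp)) (hsub (by simp))
  have hB_mem : frameMap O z (g, 0) ∈ convexHull ℝ {A, B, C} := h.B_eq ▸ hsub (by simp)
  refine hO (hconvex.segment_subset hmid_mem hB_mem ?_)
  simpa only [frameMap_zero] using frameMap_mem_segment O z (t := 0) (by linarith) hg.le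

theorem abs_lt_of_convexPos (h : IsFramedKite O A B C z g m w) (hg : 0 < g)
    (hconvex : ConvexPos O A B C) : |w| < g := by
  obtain ⟨hO, -, hB, -⟩ := hconvex
  have hB' : B ∉ convexHull ℝ {C, O, A} := by
    rwa [show ({C, O, A} : Set (ℝ × ℝ)) = {O, A, C} by grind]
  have hleft := h.neg_lt_of_notMem_convexHull hg hO
  have hright := h.reverse.neg_lt_of_notMem_convexHull hg hB'
  exact abs_lt.2 ⟨by linarith, by linarith⟩

theorem four_mul_side_sum_eq (h : IsFramedKite O A B C z g m w) (hshoelace : 0 < shoelace O A B C)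
    (hequable : quadArea O A B C = quadPerim O A B C)
    (hkite : dist2 O A = dist2 O C ∧ dist2 A B = dist2 B C) :
    4 * (dist2 O A + dist2 B C) = g * m * (z.1 ^ 2 + z.2 ^ 2) := by
  rw [quadArea, quadPerim, abs_of_pos hshoelace, h.shoelace_eq, dist2_comm C O, ← hkite.1,
    hkite.2] at hequable
  linarith

end IsFramedKite

theorem dist2_eq_dist2_iff {p q r s : ℝ × ℝ} : dist2 p q = dist2 r s ↔
    (p.1 - q.1) ^ 2 + (p.2 - q.2) ^ 2 = (r.1 - s.1) ^ 2 + (r.2 - s.2) ^ 2 :=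
  Real.sqrt_inj (by positivity) (by positivity)

theorem exists_isFramedKite_of_isLatticePt
    (hlat : IsLatticePt O ∧ IsLatticePt A ∧ IsLatticePt B ∧ IsLatticePt C)
    (hkite : dist2 O A = dist2 O C ∧ dist2 A B = dist2 B C)
    (hshoelace : 0 < shoelace O A B C) :
    ∃ u v g m w : ℤ, IsCoprime u v ∧ 0 < g ∧ 0 < m ∧ (Even (g + w) ↔ Even m) ∧
      IsFramedKite O A B C (u, v) g m w := by
  obtain ⟨⟨o₁, o₂, rfl⟩, ⟨a₁, a₂, rfl⟩, ⟨b₁, b₂, rfl⟩, ⟨c₁, c₂, rfl⟩⟩ := hlat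
  simp only [dist2_eq_dist2_iff] at hkite
  obtain ⟨hOside, hBside⟩ := hkite
  norm_cast at hOside hBside
  have hpos : 0 < (b₁ - o₁) * (c₂ - a₂) - (b₂ - o₂) * (c₁ - a₁) := by
    simp only [shoelace] at hshoelace
    norm_cast at hshoelace
    linarith
  obtain ⟨u, v, g, m, w, huv, hg, hm, hb₁, hb₂, hd₁, hd₂, he₁, he₂⟩ :=
    exists_isCoprime_of_orthogonal (e₁ := a₁ + c₁ - o₁ - b₁) (e₂ := a₂ + c₂ - o₂ - b₂) hpos
      (by linarith) (by linarith)
  have ha₁ : 2 * (a₁ - o₁) = (g + w) * u + m * v := by linarith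
  have ha₂ : 2 * (a₂ - o₂) = (g + w) * v - m * u := by linarith
  have hparity := even_iff_even_of_isCoprime huv (ha₁ ▸ even_two_mul _) (ha₂ ▸ even_two_mul _)
  rify at hb₁ hb₂ hd₁ hd₂ ha₁ ha₂
  refine ⟨u, v, g, m, w, huv, hg, hm, hparity, ?_, ?_, ?_⟩ <;>
  · ext <;> simp only [frameMap] <;> linarith

end FramedKite

section Equable

theorem kiteEquation_of_side_lengths {R : Type*} [CommRing R] [IsDomain R]
    {a b g m N w : R} (hg : g ≠ 0) (hN : N ≠ 0)
    (ha : 4 * a ^ 2 = ((g + w) ^ 2 + m ^ 2) * N) (hb : 4 * b ^ 2 = ((g - w) ^ 2 + m ^ 2) * N)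
    (hab : 4 * (a + b) = g * m * N) : KiteEquation m N g w := by
  have hdiff : m * (a - b) = 4 * w := by
    refine mul_left_cancel₀ (mul_ne_zero hg hN) ?_
    linear_combination -(a - b) * hab + ha - hb
  have ha' : 8 * m * a = g * (m ^ 2 * N) + 16 * w := by
    linear_combination m * hab + 4 * hdiff
  have hsq : (g * (m ^ 2 * N) + 16 * w) ^ 2 = 16 * m ^ 2 * (((g + w) ^ 2 + m ^ 2) * N) := by
    rw [← ha', ← ha]
    ring
  rw [KiteEquation]
  linear_combination hsq

variable {a b g m N w : ℝ}

theorem mul_sqrt_lt_of_sq_eq {l x : ℝ} (hl : 0 ≤ l) (hm : m ≠ 0) (hN : 0 < N)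
    (h : 4 * l ^ 2 = (x ^ 2 + m ^ 2) * N) : x * √N < 2 * l := by
  refine lt_of_pow_lt_pow_left₀ 2 (by positivity) ?_
  have hpos : 0 < m ^ 2 * N := by positivity
  rw [mul_pow, Real.sq_sqrt hN.le]
  linarith

theorem sixteen_lt_of_side_lengths (ha₀ : 0 ≤ a) (hb₀ : 0 ≤ b) (hg : 0 < g) (hm : 0 < m)
    (hN : 0 < N) (ha : 4 * a ^ 2 = ((g + w) ^ 2 + m ^ 2) * N)
    (hb : 4 * b ^ 2 = ((g - w) ^ 2 + m ^ 2) * N) (hab : 4 * (a + b) = g * m * N) :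
    16 < m ^ 2 * N := by
  have htriangle : (g * √N) * 4 < (g * √N) * (m * √N) :=
    calc (g * √N) * 4 = 2 * ((g + w) * √N + (g - w) * √N) := by ring
      _ < 2 * (2 * a + 2 * b) := by
        linarith [mul_sqrt_lt_of_sq_eq ha₀ hm.ne' hN ha, mul_sqrt_lt_of_sq_eq hb₀ hm.ne' hN hb]
      _ = g * m * N := by linarith
      _ = (g * √N) * (m * √N) := by rw [mul_mul_mul_comm, Real.mul_self_sqrt hN.le]
  have hlt : 4 < m * √N := lt_of_mul_lt_mul_left htriangle (by positivity)
  calc (16 : ℝ) = 4 ^ 2 := by norm_num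
    _ < (m * √N) ^ 2 := by gcongr
    _ = m ^ 2 * N := by rw [mul_pow, Real.sq_sqrt hN.le]

end Equable

section Classification

/-- The lattice equable rhombus of side length 5. -/
def equableRhombus : Set (ℝ × ℝ) := {(0, 0), (4, -3), (4, 2), (0, 5)}

/-- The lattice equable square of side length 4. -/
def equableSquare : Set (ℝ × ℝ) := {(0, 0), (4, 0), (4, 4), (0, 4)}

/-- The convex lattice equable kite of side lengths 3 and 15. -/
def equableKite : Set (ℝ × ℝ) := {(0, 0), (12, 9), (12, 12), (9, 12)}

theorem exists_isFramedKite_mem_equableParameters {O A B C : ℝ × ℝ}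
    (hshoelace : 0 < shoelace O A B C)
    (hlat : IsLatticePt O ∧ IsLatticePt A ∧ IsLatticePt B ∧ IsLatticePt C)
    (hequable : quadArea O A B C = quadPerim O A B C)
    (hkite : dist2 O A = dist2 O C ∧ dist2 A B = dist2 B C)
    (hconvex : ConvexPos O A B C) :
    ∃ u v g m w : ℤ, IsCoprime u v ∧ (m, u ^ 2 + v ^ 2, g, w) ∈ equableParameters ∧
      IsFramedKite O A B C (u, v) g m w := by
  obtain ⟨u, v, g, m, w, huv, hg, hm, hparity, h⟩ :=
    exists_isFramedKite_of_isLatticePt hlat hkite hshoelace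
  have hgR : (0 : ℝ) < g := mod_cast hg
  have hmR : (0 : ℝ) < m := mod_cast hm
  have hN : 0 < u ^ 2 + v ^ 2 :=
    lt_of_le_of_ne (by positivity) huv.sq_add_sq_ne_zero.symm
  have hNR : (0 : ℝ) < u ^ 2 + v ^ 2 := mod_cast hN
  have ha := h.four_mul_dist2_sq
  have hb := h.reverse.four_mul_dist2_sq
  simp only [Prod.fst_neg, Prod.snd_neg, neg_sq, ← sub_eq_add_neg] at hb
  have hab := h.four_mul_side_sum_eq hshoelace hequable hkite
  have heq : KiteEquation m (u ^ 2 + v ^ 2) g w := by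
    have := kiteEquation_of_side_lengths hgR.ne' hNR.ne' ha hb hab
    unfold KiteEquation at this ⊢
    exact_mod_cast this
  have hE : 16 < m ^ 2 * (u ^ 2 + v ^ 2) := mod_cast
    sixteen_lt_of_side_lengths (Real.sqrt_nonneg _) (Real.sqrt_nonneg _) hgR hmR hNR ha hb hab
  have hw : |w| < g := mod_cast h.abs_lt_of_convexPos hgR hconvex
  have h3 : ¬3 ∣ u ^ 2 + v ^ 2 := not_dvd_sq_add_sq_of_isCoprime (d := 3) (by decide) huv
  have h4 : ¬4 ∣ u ^ 2 + v ^ 2 := not_dvd_sq_add_sq_of_isCoprime (d := 4) (by decide) huv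
  exact ⟨u, v, g, m, w, huv, heq.mem_equableParameters hE hg hm hN h3 h4 hw hparity, h⟩

theorem exists_frameMap_image_model_eq {m N g w : ℤ} (h : (m, N, g, w) ∈ equableParameters) :
    ∃ o z : ℝ × ℝ, z.1 ^ 2 + z.2 ^ 2 = N ∧
      (frameMap o z '' IsFramedKite.model g m w = equableRhombus ∨
        frameMap o z '' IsFramedKite.model g m w = equableSquare ∨
        frameMap o z '' IsFramedKite.model g m w = equableKite) := by
  simp only [equableParameters, List.mem_cons, Prod.mk.injEq, List.not_mem_nil, or_false] at h
  simp only [IsFramedKite.model, Set.image_insert_eq, Set.image_singleton, frameMap]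
  rcases h with h | h | h | h | h <;> obtain ⟨rfl, rfl, rfl, rfl⟩ := h
  · refine ⟨(4, -3), (-1, 2), by norm_num, Or.inl ?_⟩
    norm_num [equableRhombus]
    grind
  · refine ⟨(0, 0), (1, 1), by norm_num, Or.inr (Or.inr ?_)⟩
    norm_num [equableKite]
  · refine ⟨(12, 12), (-1, -1), by norm_num, Or.inr (Or.inr ?_)⟩
    norm_num [equableKite]
    grind
  · refine ⟨(0, 0), (1, 1), by norm_num, Or.inr (Or.inl ?_)⟩
    norm_num [equableSquare]
  · refine ⟨(0, 0), (2, 1), by norm_num, Or.inl ?_⟩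
    norm_num [equableRhombus]

end Classification

/-- up to isometries of the plane there are exactly three convex
lattice equable kites. -/
theorem convex_lattice_equable_kites (O A B C : ℝ × ℝ)
    (hquad : IsQuad O A B C)
    (hlat : IsLatticePt O ∧ IsLatticePt A ∧ IsLatticePt B ∧ IsLatticePt C)
    (hequable : quadArea O A B C = quadPerim O A B C)
    (hkite : dist2 O A = dist2 O C ∧ dist2 A B = dist2 B C)
    (hconvex : ConvexPos O A B C) :
    ∃ φ : ℝ × ℝ → ℝ × ℝ, IsIsometry2 φ ∧
      (φ '' {O, A, B, C} =
         ({((0 : ℝ), (0 : ℝ)), ((4 : ℝ), (-3 : ℝ)), ((4 : ℝ), (2 : ℝ)), ((0 : ℝ), (5 : ℝ))} :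
           Set (ℝ × ℝ)) ∨
       φ '' {O, A, B, C} =
         ({((0 : ℝ), (0 : ℝ)), ((4 : ℝ), (0 : ℝ)), ((4 : ℝ), (4 : ℝ)), ((0 : ℝ), (4 : ℝ))} :
           Set (ℝ × ℝ)) ∨
       φ '' {O, A, B, C} =
         ({((0 : ℝ), (0 : ℝ)), ((12 : ℝ), (9 : ℝ)), ((12 : ℝ), (12 : ℝ)), ((9 : ℝ), (12 : ℝ))} :
           Set (ℝ × ℝ))) := by
  obtain ⟨u, v, g, m, w, huv, hparam, h⟩ :=
    exists_isFramedKite_mem_equableParameters hquad.2 hlat hequable hkite hconvex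
  obtain ⟨o, z, hz, hmodel⟩ := exists_frameMap_image_model_eq hparam
  have hN : (u : ℝ) ^ 2 + (v : ℝ) ^ 2 ≠ 0 := mod_cast huv.sq_add_sq_ne_zero
  obtain ⟨φ, hφ, hcomp⟩ :=
    exists_isIsometry2_frameMap O o (z := (u, v)) hN (by rw [hz]; push_cast; rfl)
  refine ⟨φ, hφ, ?_⟩
  rw [h.vertices_eq, ← Set.image_comp, hcomp]
  exact hmodel
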